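/- There exists a constant γ > 0 such that for every n ≥ 1, every word w of length n over A whose fundamental interval Δ(w) is full, and every Borel set E ⊆ Δ(w), one has μ(Tⁿ(E))·μ(Δ(w)) ≤ γ·μ(E), where Tⁿ(E) denotes the image of E under the n-th iterate of T. (This is Rohlin's criterion, from which the paper deduces that T is exact.) -/

import Mathlib

open MeasureTheory Set

/-- The greedy β-transformation with deleted digit set `{0, a₁, a₂}`:
`T x = βx` on `Δ(0) = [0, a₁/β)`, `T x = βx − a₁` on `Δ(a₁) = [a₁/β, a₂/β)`,
and `T x = βx − a₂` on `Δ(a₂) = [a₂/β, a₁)`. -/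
noncomputable def greedyT (β a₁ a₂ : ℝ) (x : ℝ) : ℝ :=
  if x < a₁ / β then β * x
  else if x < a₂ / β then β * x - a₁
  else β * x - a₂

/-- The interval `Δ(b)` associated to a digit `b ∈ {0, a₁, a₂}`. -/
noncomputable def digitInt (β a₁ a₂ : ℝ) (b : ℝ) : Set ℝ :=
  if b = 0 then Set.Ico 0 (a₁ / β)
  else if b = a₁ then Set.Ico (a₁ / β) (a₂ / β)
  else Set.Ico (a₂ / β) a₁

/-- The fundamental interval `Δ(w) = ⋂_{k < n} T⁻ᵏ Δ(b_k)` of a word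
`w = (b₀, …, b_{n−1})`. -/
noncomputable def cyl (β a₁ a₂ : ℝ) (w : List ℝ) : Set ℝ :=
  ⋂ k ∈ Finset.range w.length,
    (greedyT β a₁ a₂)^[k] ⁻¹' digitInt β a₁ a₂ (w.getD k 0)

/-- `w` is a word over the alphabet `A = {0, a₁, a₂}`. -/
def isWord (a₁ a₂ : ℝ) (w : List ℝ) : Prop := ∀ b ∈ w, b = 0 ∨ b = a₁ ∨ b = a₂

/-- The fundamental interval `Δ(w)` is full: `λ(Δ(w)) = a₁/β^|w|`. -/
def isFull (β a₁ a₂ : ℝ) (w : List ℝ) : Prop :=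
  volume (cyl β a₁ a₂ w) = ENNReal.ofReal (a₁ / β ^ w.length)

/-- Condition (6): `a₁ · max (β−1) 1 < a₂ < a₁ · min 2 β`. -/
def condition6 (β a₁ a₂ : ℝ) : Prop :=
  a₁ * max (β - 1) 1 < a₂ ∧ a₂ < a₁ * min 2 β

/-- `w ∈ Bₙ`: `w` is a word of length `n` over `A` with `λ(Δ(w)) > 0`, `Δ(w)`
non-full, and `Δ(w′)` non-full for every nonempty proper prefix `w′` of `w`. -/
def memB (β a₁ a₂ : ℝ) (n : ℕ) (w : List ℝ) : Prop :=
  w.length = n ∧ isWord a₁ a₂ w ∧ 0 < volume (cyl β a₁ a₂ w) ∧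
    ¬ isFull β a₁ a₂ w ∧
    ∀ w' : List ℝ, w' ≠ [] → w' <+: w → w' ≠ w → ¬ isFull β a₁ a₂ w'

/-- `κ(n)`: the number of elements of `Bₙ`. -/
noncomputable def kappa (β a₁ a₂ : ℝ) (n : ℕ) : ℕ :=
  {w : List ℝ | memB β a₁ a₂ n w}.ncard

/-- The density `φ = 1 + Σ_{n≥1} Σ_{w ∈ Bₙ} β^(−n)·1_{TⁿΔ(w)}`. -/
noncomputable def phi (β a₁ a₂ : ℝ) (x : ℝ) : ℝ :=
  1 + ∑' n : ℕ, ∑' w : {w : List ℝ // memB β a₁ a₂ (n + 1) w},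
    Set.indicator ((greedyT β a₁ a₂)^[n + 1] '' cyl β a₁ a₂ w.1)
      (fun _ => (β ^ (n + 1))⁻¹) x

/-- The measure `μ` on `[0, a₁)` with density `φ` with respect to Lebesgue
measure: `μ(E) = ∫_E φ dλ` for Borel `E ⊆ [0, a₁)`. -/
noncomputable def muMeas (β a₁ a₂ : ℝ) : Measure ℝ :=
  (volume.restrict (Set.Ico 0 a₁)).withDensity
    fun x => ENNReal.ofReal (phi β a₁ a₂ x)

/-!
On `Δ(w)` the map `Tⁿ` is affine with slope `βⁿ`, and `φ ≥ 1`, so Rohlin's criterion follows once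
`φ` is bounded, that is, once `Σ #Bₙ β⁻ⁿ` converges. Let `τ(w)` be the length of `TⁿΔ(w)`. Appending
a letter to a word `w ∈ Bₙ` gives at most one nonempty non-full interval, unless `Δ(w0)` is full,
when there may be two; but then `Δ(w0)` takes the length `a₁` out of the available `β τ(w)`. Either
way, the sum of the weights `a₁ + τ` over the non-full extensions of `w` is at most
`a₁ + β τ(w) = β (a₁ + τ(w)) - (β - 1) a₁`, and telescoping gives
`Σ_{n ≥ 0} #Bₙ β⁻ⁿ ≤ 2β / (β - 1)`.
-/

section

variable {β a₁ a₂ : ℝ}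

theorem condition6.lt (ha₁ : 0 < a₁) (hc : condition6 β a₁ a₂) : a₁ < a₂ :=
  (le_mul_of_one_le_right ha₁.le (le_max_right _ _)).trans_lt hc.1

theorem condition6.mul_sub_one_lt (ha₁ : 0 < a₁) (hc : condition6 β a₁ a₂) :
    a₁ * (β - 1) < a₂ :=
  (mul_le_mul_of_nonneg_left (le_max_left _ _) ha₁.le).trans_lt hc.1

theorem condition6.lt_mul_two (ha₁ : 0 < a₁) (hc : condition6 β a₁ a₂) : a₂ < a₁ * 2 :=
  hc.2.trans_le (mul_le_mul_of_nonneg_left (min_le_left _ _) ha₁.le)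

theorem condition6.lt_mul (ha₁ : 0 < a₁) (hc : condition6 β a₁ a₂) : a₂ < a₁ * β :=
  hc.2.trans_le (mul_le_mul_of_nonneg_left (min_le_right _ _) ha₁.le)

theorem condition6.one_lt (ha₁ : 0 < a₁) (hc : condition6 β a₁ a₂) : 1 < β :=
  (lt_mul_iff_one_lt_right ha₁).1 ((hc.lt ha₁).trans (hc.lt_mul ha₁))

theorem isWord_append_singleton {w : List ℝ} {b : ℝ} :
    isWord a₁ a₂ (w ++ [b]) ↔ isWord a₁ a₂ w ∧ (b = 0 ∨ b = a₁ ∨ b = a₂) := by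
  simp only [isWord, List.forall_mem_append, List.forall_mem_singleton]

theorem digit_nonneg (ha₁ : 0 < a₁) (h12 : a₁ < a₂) {b : ℝ} (hb : b = 0 ∨ b = a₁ ∨ b = a₂) :
    0 ≤ b := by
  rcases hb with rfl | rfl | rfl <;> linarith

/-- The right endpoint of `Δ(b)`, scaled by `β`: the digit following `b`, or `β * a₁` when `b` is
the last digit `a₂`. -/
noncomputable def nextDigit (β a₁ a₂ b : ℝ) : ℝ :=
  if b = 0 then a₁ else if b = a₁ then a₂ else β * a₁

theorem nextDigit_le (ha₁ : 0 < a₁) (hβ : 1 ≤ β) (h : a₂ ≤ a₁ * β) (b : ℝ) :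
    nextDigit β a₁ a₂ b ≤ β * a₁ := by
  unfold nextDigit
  split_ifs
  · exact le_mul_of_one_le_left ha₁.le hβ
  · rwa [mul_comm]
  · rfl

theorem nextDigit_sub_le (h₁ : a₁ * (β - 1) ≤ a₂) (h₂ : a₂ ≤ a₁ * 2) {b : ℝ}
    (hb : b = 0 ∨ b = a₁ ∨ b = a₂) : nextDigit β a₁ a₂ b - b ≤ a₁ := by
  unfold nextDigit
  split_ifs with hb0 hb1
  · rw [hb0, sub_zero]
  · linarith
  · obtain rfl : b = a₂ := by tauto
    linarith

theorem mem_digitInt_iff (hβ : 0 < β) (ha₁ : 0 < a₁) (h12 : a₁ < a₂) {b y : ℝ}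
    (hb : b = 0 ∨ b = a₁ ∨ b = a₂) :
    y ∈ digitInt β a₁ a₂ b ↔ β * y ∈ Ico b (nextDigit β a₁ a₂ b) := by
  have ha₂ : a₂ ≠ 0 := (ha₁.trans h12).ne'
  rcases hb with rfl | rfl | rfl <;>
    simp [digitInt, nextDigit, ha₁.ne', ha₂, h12.ne', div_le_iff₀' hβ, lt_div_iff₀' hβ, hβ]

theorem greedyT_of_mem_digitInt (hβ : 0 < β) (ha₁ : 0 < a₁) (h12 : a₁ < a₂) {b y : ℝ}
    (hb : b = 0 ∨ b = a₁ ∨ b = a₂) (hy : y ∈ digitInt β a₁ a₂ b) :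
    greedyT β a₁ a₂ y = β * y - b := by
  have ha₂ : a₂ ≠ 0 := (ha₁.trans h12).ne'
  rw [mem_digitInt_iff hβ ha₁ h12 hb] at hy
  simp only [greedyT, lt_div_iff₀' hβ]
  rcases hb with rfl | rfl | rfl
  · simp_all [nextDigit]
  · simp_all [nextDigit, ha₁.ne', hy.1.not_gt]
  · rw [if_neg (by linarith [hy.1]), if_neg (by linarith [hy.1])]

theorem cyl_nil : cyl β a₁ a₂ [] = univ := by simp [cyl]

theorem cyl_append_singleton (w : List ℝ) (b : ℝ) :
    cyl β a₁ a₂ (w ++ [b]) =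
      cyl β a₁ a₂ w ∩ (greedyT β a₁ a₂)^[w.length] ⁻¹' digitInt β a₁ a₂ b := by
  rw [cyl, List.length_append, List.length_singleton, Finset.range_add_one,
    Finset.set_biInter_insert, inter_comm]
  congr 1
  · refine iInter₂_congr fun k hk => ?_
    rw [List.getD_append _ _ _ _ (Finset.mem_range.1 hk)]
  · simp

/-- The number `s` such that `T([0, t) ∩ Δ(b)) = [0, s)`; it may be negative when `[0, t)`
does not meet `Δ(b)`. -/
noncomputable def stepLength (β a₁ a₂ t b : ℝ) : ℝ :=
  min (β * t) (nextDigit β a₁ a₂ b) - b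

/-- The constant `d` such that `Tⁿ x = βⁿ x - d` on `Δ(w)`, where `n` is the length of `w`. -/
def branchOffset (β : ℝ) (w : List ℝ) : ℝ :=
  w.foldl (fun d b => β * d + b) 0

theorem branchOffset_append_singleton (w : List ℝ) (b : ℝ) :
    branchOffset β (w ++ [b]) = β * branchOffset β w + b := by
  simp [branchOffset]

/-- The number `τ` such that `TⁿΔ(w) = [0, τ)`, where `n` is the length of `w ≠ []`; it may be
negative when `Δ(w)` is empty. -/
noncomputable def imageLength (β a₁ a₂ : ℝ) (w : List ℝ) : ℝ :=
  w.foldl (stepLength β a₁ a₂) a₁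

theorem imageLength_nil : imageLength β a₁ a₂ [] = a₁ := rfl

theorem imageLength_append_singleton (w : List ℝ) (b : ℝ) :
    imageLength β a₁ a₂ (w ++ [b]) = stepLength β a₁ a₂ (imageLength β a₁ a₂ w) b := by
  simp [imageLength]

theorem imageLength_le (h₁ : a₁ * (β - 1) ≤ a₂) (h₂ : a₂ ≤ a₁ * 2) {w : List ℝ}
    (hw : isWord a₁ a₂ w) : imageLength β a₁ a₂ w ≤ a₁ := by
  induction w using List.reverseRecOn with
  | nil => exact imageLength_nil.le
  | append_singleton w b _ =>
    rw [imageLength_append_singleton]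
    calc stepLength β a₁ a₂ (imageLength β a₁ a₂ w) b
        ≤ nextDigit β a₁ a₂ b - b := sub_le_sub_right (min_le_right _ _) _
      _ ≤ a₁ := nextDigit_sub_le h₁ h₂ (isWord_append_singleton.1 hw).2

theorem iterate_greedyT_of_mem_cyl (hβ : 0 < β) (ha₁ : 0 < a₁) (h12 : a₁ < a₂) {w : List ℝ}
    (hw : isWord a₁ a₂ w) {x : ℝ} (hx : x ∈ cyl β a₁ a₂ w) :
    (greedyT β a₁ a₂)^[w.length] x = β ^ w.length * x - branchOffset β w := by
  induction w using List.reverseRecOn with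
  | nil => simp [branchOffset]
  | append_singleton w b ih =>
    rw [isWord_append_singleton] at hw
    rw [cyl_append_singleton] at hx
    rw [List.length_append, List.length_singleton, Function.iterate_succ_apply',
      greedyT_of_mem_digitInt hβ ha₁ h12 hw.2 hx.2, ih hw.1 hx.1, branchOffset_append_singleton]
    ring

theorem mem_Ico_and_mem_digitInt_iff (hβ : 0 < β) (ha₁ : 0 < a₁) (h12 : a₁ < a₂) {b t y : ℝ}
    (hb : b = 0 ∨ b = a₁ ∨ b = a₂) :
    y ∈ Ico 0 t ∧ y ∈ digitInt β a₁ a₂ b ↔ β * y - b ∈ Ico 0 (stepLength β a₁ a₂ t b) := by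
  have hb_nonneg := digit_nonneg ha₁ h12 hb
  have hy_nonneg (h : b ≤ β * y) : 0 ≤ y := nonneg_of_mul_nonneg_right (hb_nonneg.trans h) hβ
  rw [mem_digitInt_iff hβ ha₁ h12 hb]
  simp only [stepLength, mem_Ico, sub_nonneg, sub_lt_sub_iff_right, lt_min_iff,
    mul_lt_mul_iff_right₀ hβ]
  tauto

theorem mem_Ico_inter_cyl_iff (hβ : 0 < β) (ha₁ : 0 < a₁) (h12 : a₁ < a₂) {w : List ℝ}
    (hw : isWord a₁ a₂ w) {x : ℝ} :
    x ∈ Ico 0 a₁ ∩ cyl β a₁ a₂ w ↔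
      β ^ w.length * x - branchOffset β w ∈ Ico 0 (imageLength β a₁ a₂ w) := by
  induction w using List.reverseRecOn with
  | nil => simp [cyl_nil, branchOffset, imageLength_nil]
  | append_singleton w b ih =>
    rw [isWord_append_singleton] at hw
    have haffine : β ^ (w ++ [b]).length * x - branchOffset β (w ++ [b]) =
        β * (β ^ w.length * x - branchOffset β w) - b := by
      rw [branchOffset_append_singleton, List.length_append, List.length_singleton]
      ring
    rw [haffine, imageLength_append_singleton, ← mem_Ico_and_mem_digitInt_iff hβ ha₁ h12 hw.2,
      ← ih hw.1, cyl_append_singleton, ← inter_assoc, mem_inter_iff]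
    refine and_congr_right fun hx => ?_
    rw [mem_preimage, iterate_greedyT_of_mem_cyl hβ ha₁ h12 hw.1 hx.2]

theorem cyl_subset_Ico (hβ : 1 ≤ β) (ha₁ : 0 < a₁) (h12 : a₁ < a₂) (h : a₂ ≤ a₁ * β)
    {w : List ℝ} (hw : isWord a₁ a₂ w) (hne : w ≠ []) : cyl β a₁ a₂ w ⊆ Ico 0 a₁ := by
  have hβ0 : 0 < β := one_pos.trans_le hβ
  obtain ⟨b, v, rfl⟩ := List.exists_cons_of_ne_nil hne
  intro x hx
  have hb : b = 0 ∨ b = a₁ ∨ b = a₂ := hw b List.mem_cons_self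
  have hx_digit : x ∈ digitInt β a₁ a₂ b := by
    simpa using mem_iInter₂.1 hx 0 (by simp)
  have hx_lt : x < a₁ := lt_of_mul_lt_mul_left
    (((mem_digitInt_iff hβ0 ha₁ h12 hb).1 hx_digit).2.trans_le (nextDigit_le ha₁ hβ h b)) hβ0.le
  have hx_nonneg : b ≤ β * x := ((mem_digitInt_iff hβ0 ha₁ h12 hb).1 hx_digit).1
  have hb_nonneg := digit_nonneg ha₁ h12 hb
  exact ⟨nonneg_of_mul_nonneg_right (hb_nonneg.trans hx_nonneg) hβ0, hx_lt⟩

open scoped Pointwise in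
theorem volume_image_mul_sub (r d : ℝ) (s : Set ℝ) :
    volume ((fun x => r * x - d) '' s) = ENNReal.ofReal |r| * volume s := by
  have : (fun x => r * x - d) '' s = (fun x => x - d) '' (r • s) := by
    simp only [← image_smul, image_image, smul_eq_mul]
  rw [this]
  simp [sub_eq_add_neg, Measure.addHaar_smul]

theorem volume_iterate_image (hβ : 0 < β) (ha₁ : 0 < a₁) (h12 : a₁ < a₂) {w : List ℝ}
    (hw : isWord a₁ a₂ w) {E : Set ℝ} (hE : E ⊆ cyl β a₁ a₂ w) :
    volume ((greedyT β a₁ a₂)^[w.length] '' E) = ENNReal.ofReal (β ^ w.length) * volume E := by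
  rw [image_congr fun x hx => iterate_greedyT_of_mem_cyl hβ ha₁ h12 hw (hE hx),
    volume_image_mul_sub, abs_of_pos (by positivity)]

theorem iterate_image_Ico_inter_cyl (hβ : 0 < β) (ha₁ : 0 < a₁) (h12 : a₁ < a₂) {w : List ℝ}
    (hw : isWord a₁ a₂ w) :
    (greedyT β a₁ a₂)^[w.length] '' (Ico 0 a₁ ∩ cyl β a₁ a₂ w) =
      Ico 0 (imageLength β a₁ a₂ w) := by
  rw [image_congr fun x hx => iterate_greedyT_of_mem_cyl hβ ha₁ h12 hw hx.2]
  refine Subset.antisymm (image_subset_iff.2 fun x hx =>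
    (mem_Ico_inter_cyl_iff hβ ha₁ h12 hw).1 hx) fun y hy => ?_
  have hy_eq : β ^ w.length * ((y + branchOffset β w) / β ^ w.length) - branchOffset β w = y := by
    rw [mul_div_cancel₀ _ (pow_pos hβ _).ne', add_sub_cancel_right]
  exact ⟨_, (mem_Ico_inter_cyl_iff hβ ha₁ h12 hw).2 (by rwa [hy_eq]), hy_eq⟩

theorem volume_cyl (hβ : 1 ≤ β) (ha₁ : 0 < a₁) (h12 : a₁ < a₂) (h : a₂ ≤ a₁ * β) {w : List ℝ}
    (hw : isWord a₁ a₂ w) (hne : w ≠ []) :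
    volume (cyl β a₁ a₂ w) = ENNReal.ofReal (imageLength β a₁ a₂ w / β ^ w.length) := by
  have hβ0 : 0 < β := one_pos.trans_le hβ
  have hpow : 0 < β ^ w.length := pow_pos hβ0 _
  have himage := volume_iterate_image hβ0 ha₁ h12 hw (Subset.refl (cyl β a₁ a₂ w))
  rw [← inter_eq_right.2 (cyl_subset_Ico hβ ha₁ h12 h hw hne),
    iterate_image_Ico_inter_cyl hβ0 ha₁ h12 hw, Real.volume_Ico, sub_zero] at himage
  rw [ENNReal.ofReal_div_of_pos hpow, himage,
    inter_eq_right.2 (cyl_subset_Ico hβ ha₁ h12 h hw hne), mul_comm,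
    ENNReal.mul_div_cancel_right (by simpa using hpow) ENNReal.ofReal_ne_top]

open Finset in
theorem sum_stepLength_nonfull_le (ha₁ : 0 < a₁) (h12 : a₁ < a₂) {t : ℝ} (ht : 0 ≤ β * t) :
    ∑ b ∈ {0, a₁, a₂} with 0 < stepLength β a₁ a₂ t b ∧ stepLength β a₁ a₂ t b < a₁,
      (a₁ + stepLength β a₁ a₂ t b) ≤ a₁ + β * t := by
  have ha₂ : 0 < a₂ := ha₁.trans h12
  set g : ℝ → ℝ := fun s => if 0 < s ∧ s < a₁ then a₁ + s else 0 with hg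
  have g_eq_zero {s : ℝ} (hs : s ≤ 0 ∨ a₁ ≤ s) : g s = 0 :=
    if_neg fun h => hs.elim h.1.not_ge h.2.not_ge
  have g_le {s u : ℝ} (hsu : s ≤ u) (hu : 0 ≤ a₁ + u) : g s ≤ a₁ + u := by
    simp only [hg]
    split_ifs
    · gcongr
    · exact hu
  have h0 : stepLength β a₁ a₂ t 0 = min (β * t) a₁ := by simp [stepLength, nextDigit]
  have h1 : stepLength β a₁ a₂ t a₁ = min (β * t) a₂ - a₁ := by
    simp [stepLength, nextDigit, ha₁.ne']
  have h2 : stepLength β a₁ a₂ t a₂ ≤ β * t - a₂ := sub_le_sub_right (min_le_left _ _) _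
  rw [sum_filter, sum_insert (by simp [ha₁.ne, ha₂.ne]), sum_pair h12.ne, h0, h1]
  change g _ + (g _ + g _) ≤ _
  rcases le_total (β * t) a₁ with ht₁ | ht₁
  · rw [g_eq_zero (s := stepLength β a₁ a₂ t a₂) (by left; linarith), min_eq_left ht₁,
      min_eq_left (ht₁.trans h12.le), g_eq_zero (s := β * t - a₁) (by left; linarith)]
    linarith [g_le le_rfl (by linarith : 0 ≤ a₁ + β * t)]
  rw [min_eq_right ht₁, g_eq_zero (Or.inr le_rfl)]
  rcases le_total (β * t) a₂ with ht₂ | ht₂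
  · rw [g_eq_zero (s := stepLength β a₁ a₂ t a₂) (by left; linarith), min_eq_left ht₂]
    linarith [g_le le_rfl (by linarith : 0 ≤ a₁ + (β * t - a₁))]
  · rw [min_eq_right ht₂]
    linarith [g_le le_rfl (by linarith : 0 ≤ a₁ + (a₂ - a₁)),
      g_le h2 (by linarith : 0 ≤ a₁ + (β * t - a₂))]

/-- The words of length `n` over `{0, a₁, a₂}` all of whose nonempty prefixes have positive image
length less than `a₁`. Generated letter by letter, they form a `Finset` containing `Bₙ`. -/
noncomputable def nonfullWords (β a₁ a₂ : ℝ) : ℕ → Finset (List ℝ)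
  | 0 => {[]}
  | n + 1 => ((nonfullWords β a₁ a₂ n ×ˢ {0, a₁, a₂}).image fun p => p.1 ++ [p.2]).filter
      fun w => 0 < imageLength β a₁ a₂ w ∧ imageLength β a₁ a₂ w < a₁

theorem imageLength_pos_of_mem_nonfullWords (ha₁ : 0 < a₁) {n : ℕ} {w : List ℝ}
    (hw : w ∈ nonfullWords β a₁ a₂ n) : 0 < imageLength β a₁ a₂ w := by
  cases n with
  | zero => rwa [Finset.mem_singleton.1 hw]
  | succ n => exact (Finset.mem_filter.1 hw).2.1

theorem sum_nonfullWords_succ (f : List ℝ → ℝ) (n : ℕ) :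
    ∑ w ∈ nonfullWords β a₁ a₂ (n + 1), f w =
      ∑ v ∈ nonfullWords β a₁ a₂ n, ∑ b ∈ {0, a₁, a₂} with
        0 < imageLength β a₁ a₂ (v ++ [b]) ∧ imageLength β a₁ a₂ (v ++ [b]) < a₁,
          f (v ++ [b]) := by
  have hinj : Function.Injective fun p : List ℝ × ℝ => p.1 ++ [p.2] := fun p q hpq => by
    simpa [Prod.ext_iff] using List.append_inj' hpq rfl
  rw [nonfullWords, Finset.sum_filter, Finset.sum_image hinj.injOn, Finset.sum_product]
  simp only [Finset.sum_filter]

theorem sum_nonfullWords_succ_add_card_le (hβ : 0 < β) (ha₁ : 0 < a₁) (h12 : a₁ < a₂) (n : ℕ) :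
    ∑ w ∈ nonfullWords β a₁ a₂ (n + 1), (a₁ + imageLength β a₁ a₂ w) +
        (β - 1) * a₁ * (nonfullWords β a₁ a₂ n).card ≤
      β * ∑ w ∈ nonfullWords β a₁ a₂ n, (a₁ + imageLength β a₁ a₂ w) := by
  rw [sum_nonfullWords_succ, mul_comm _ (Finset.card _ : ℝ), ← nsmul_eq_mul, ← Finset.sum_const,
    ← Finset.sum_add_distrib, Finset.mul_sum]
  refine Finset.sum_le_sum fun v hv => ?_
  have ht : 0 ≤ β * imageLength β a₁ a₂ v :=
    mul_nonneg hβ.le (imageLength_pos_of_mem_nonfullWords ha₁ hv).le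
  simp only [imageLength_append_singleton]
  linarith [sum_stepLength_nonfull_le ha₁ h12 ht]

theorem sum_div_pow_le_of_succ_add_le {r : ℝ} (hr : 0 < r) {u v : ℕ → ℝ} (hu : ∀ n, 0 ≤ u n)
    (h : ∀ n, u (n + 1) + v n ≤ r * u n) (N : ℕ) :
    ∑ n ∈ Finset.range N, v n / r ^ (n + 1) ≤ u 0 := by
  suffices ∑ n ∈ Finset.range N, v n / r ^ (n + 1) + u N / r ^ N ≤ u 0 from
    (le_add_of_nonneg_right (div_nonneg (hu N) (pow_nonneg hr.le N))).trans this
  induction N with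
  | zero => simp
  | succ N ih =>
    calc ∑ n ∈ Finset.range (N + 1), v n / r ^ (n + 1) + u (N + 1) / r ^ (N + 1)
        = ∑ n ∈ Finset.range N, v n / r ^ (n + 1) + (u (N + 1) + v N) / r ^ (N + 1) := by
          rw [Finset.sum_range_succ]; ring
      _ ≤ ∑ n ∈ Finset.range N, v n / r ^ (n + 1) + r * u N / r ^ (N + 1) := by
          gcongr; exact h N
      _ = ∑ n ∈ Finset.range N, v n / r ^ (n + 1) + u N / r ^ N := by
          rw [pow_succ', mul_div_mul_left _ _ hr.ne']
      _ ≤ u 0 := ih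

theorem sum_card_nonfullWords_div_pow_le (hβ : 1 < β) (ha₁ : 0 < a₁) (h12 : a₁ < a₂) (N : ℕ) :
    ∑ n ∈ Finset.range N, ((nonfullWords β a₁ a₂ n).card : ℝ) / β ^ n ≤ 2 * β / (β - 1) := by
  have hβ0 : 0 < β := one_pos.trans hβ
  have hβ1 : 0 < β - 1 := sub_pos.2 hβ
  have hu (n : ℕ) : 0 ≤ ∑ w ∈ nonfullWords β a₁ a₂ n, (a₁ + imageLength β a₁ a₂ w) :=
    Finset.sum_nonneg fun w hw =>
      add_nonneg ha₁.le (imageLength_pos_of_mem_nonfullWords ha₁ hw).le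
  have hsum := sum_div_pow_le_of_succ_add_le hβ0 hu
    (sum_nonfullWords_succ_add_card_le hβ0 ha₁ h12) N
  have hstart : ∑ w ∈ nonfullWords β a₁ a₂ 0, (a₁ + imageLength β a₁ a₂ w) = 2 * a₁ := by
    simp [nonfullWords, imageLength_nil, two_mul]
  have hfactor : ∑ n ∈ Finset.range N,
      (β - 1) * a₁ * (nonfullWords β a₁ a₂ n).card / β ^ (n + 1) =
      (β - 1) * a₁ / β * ∑ n ∈ Finset.range N, ((nonfullWords β a₁ a₂ n).card : ℝ) / β ^ n := by
    rw [Finset.mul_sum]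
    refine Finset.sum_congr rfl fun n _ => ?_
    rw [pow_succ', mul_div_mul_comm]
  rw [hfactor, hstart, ← le_div_iff₀' (by positivity)] at hsum
  refine hsum.trans_eq ?_
  field_simp

theorem memB_of_memB_append_singleton {n : ℕ} {w : List ℝ} {b : ℝ}
    (h : memB β a₁ a₂ (n + 1) (w ++ [b])) : memB β a₁ a₂ n w := by
  obtain ⟨hlen, hw, hpos, -, hprefix⟩ := h
  have hne : w ≠ w ++ [b] := by simp
  refine ⟨by simpa using hlen, (isWord_append_singleton.1 hw).1, ?_, ?_,
    fun w' hne' hw' hww' => hprefix w' hne' (hw'.trans (w.prefix_append [b])) ?_⟩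
  · exact hpos.trans_le (measure_mono (cyl_append_singleton w b ▸ inter_subset_left))
  · rcases eq_or_ne w [] with rfl | hnil
    · simp [isFull, cyl_nil]
    · exact hprefix w hnil (w.prefix_append [b]) hne
  · rintro rfl
    simpa using hw'.length_le

theorem memB.imageLength_mem_Ioo (ha₁ : 0 < a₁) (hc : condition6 β a₁ a₂) {n : ℕ} {w : List ℝ}
    (h : memB β a₁ a₂ n w) (hne : w ≠ []) : imageLength β a₁ a₂ w ∈ Ioo 0 a₁ := by
  have hβ := hc.one_lt ha₁
  obtain ⟨-, hw, hpos, hnonfull, -⟩ := h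
  have hvol := volume_cyl hβ.le ha₁ (hc.lt ha₁) (hc.lt_mul ha₁).le hw hne
  constructor
  · rwa [hvol, ENNReal.ofReal_pos, div_pos_iff_of_pos_right (by positivity)] at hpos
  · refine (imageLength_le (hc.mul_sub_one_lt ha₁).le (hc.lt_mul_two ha₁).le hw).lt_of_ne
      fun hfull => hnonfull ?_
    rw [isFull, hvol, hfull]

theorem memB.mem_nonfullWords (ha₁ : 0 < a₁) (hc : condition6 β a₁ a₂) {n : ℕ} {w : List ℝ}
    (h : memB β a₁ a₂ n w) : w ∈ nonfullWords β a₁ a₂ n := by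
  induction n generalizing w with
  | zero => simpa [nonfullWords] using h.1
  | succ n ih =>
    have hne : w ≠ [] := List.ne_nil_of_length_eq_add_one h.1
    have hlength := h.imageLength_mem_Ioo ha₁ hc hne
    obtain ⟨v, b, rfl⟩ := List.eq_nil_or_concat' w |>.resolve_left hne
    refine Finset.mem_filter.2 ⟨Finset.mem_image.2 ⟨(v, b), Finset.mem_product.2
      ⟨ih (memB_of_memB_append_singleton h), ?_⟩, rfl⟩, hlength⟩
    simpa using (isWord_append_singleton.1 h.2.1).2

theorem one_le_phi (hβ : 0 ≤ β) (x : ℝ) : 1 ≤ phi β a₁ a₂ x :=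
  le_add_of_nonneg_right <| tsum_nonneg fun n => tsum_nonneg fun _ =>
    indicator_nonneg (fun _ _ => by positivity) x

theorem tsum_indicator_const_le {ι α : Type*} [Finite ι] (s : ι → Set α) {c : ℝ} (hc : 0 ≤ c)
    (x : α) : ∑' i, (s i).indicator (fun _ => c) x ≤ Nat.card ι * c := by
  have := Fintype.ofFinite ι
  rw [tsum_fintype, Nat.card_eq_fintype_card, ← nsmul_eq_mul]
  exact Finset.sum_le_card_nsmul _ _ _ fun i _ => indicator_apply_le' (fun _ => le_rfl) fun _ => hc

theorem finite_memB (ha₁ : 0 < a₁) (hc : condition6 β a₁ a₂) (n : ℕ) :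
    {w | memB β a₁ a₂ n w}.Finite :=
  (nonfullWords β a₁ a₂ n).finite_toSet.subset fun _ hw => hw.mem_nonfullWords ha₁ hc

theorem kappa_le_card_nonfullWords (ha₁ : 0 < a₁) (hc : condition6 β a₁ a₂) (n : ℕ) :
    kappa β a₁ a₂ n ≤ (nonfullWords β a₁ a₂ n).card := by
  rw [kappa, ← ncard_coe_finset]
  exact ncard_le_ncard (fun _ hw => hw.mem_nonfullWords ha₁ hc) (Finset.finite_toSet _)

theorem phi_le (ha₁ : 0 < a₁) (hc : condition6 β a₁ a₂) (x : ℝ) :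
    phi β a₁ a₂ x ≤ 2 * β / (β - 1) := by
  have hβ := hc.one_lt ha₁
  rw [phi, ← le_sub_iff_add_le']
  refine Real.tsum_le_of_sum_range_le (fun n => tsum_nonneg fun _ =>
    indicator_nonneg (fun _ _ => by positivity) x) fun N => ?_
  have hterm (n : ℕ) : ∑' w : {w : List ℝ // memB β a₁ a₂ (n + 1) w},
      indicator ((greedyT β a₁ a₂)^[n + 1] '' cyl β a₁ a₂ w.1) (fun _ => (β ^ (n + 1))⁻¹) x ≤
      (nonfullWords β a₁ a₂ (n + 1)).card / β ^ (n + 1) := by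
    have : Finite {w | memB β a₁ a₂ (n + 1) w} := finite_memB ha₁ hc (n + 1)
    calc _ ≤ (kappa β a₁ a₂ (n + 1) : ℝ) * (β ^ (n + 1))⁻¹ :=
          tsum_indicator_const_le _ (by positivity) x
      _ ≤ _ := by
          rw [← div_eq_mul_inv]
          gcongr
          exact kappa_le_card_nonfullWords ha₁ hc (n + 1)
  have hbound := sum_card_nonfullWords_div_pow_le hβ ha₁ (hc.lt ha₁) (N + 1)
  rw [Finset.sum_range_succ', pow_zero, div_one] at hbound
  calc _ ≤ ∑ n ∈ Finset.range N, ((nonfullWords β a₁ a₂ (n + 1)).card : ℝ) / β ^ (n + 1) :=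
        Finset.sum_le_sum fun n _ => hterm n
    _ ≤ 2 * β / (β - 1) - 1 := by simpa [nonfullWords, le_sub_iff_add_le] using hbound

theorem muMeas_le (ha₁ : 0 < a₁) (hc : condition6 β a₁ a₂) (S : Set ℝ) :
    muMeas β a₁ a₂ S ≤ ENNReal.ofReal (2 * β / (β - 1)) * volume S :=
  calc muMeas β a₁ a₂ S
      ≤ ((volume.restrict (Ico 0 a₁)).withDensity
          fun _ => ENNReal.ofReal (2 * β / (β - 1))) S :=
        withDensity_mono (.of_forall fun x => ENNReal.ofReal_le_ofReal (phi_le ha₁ hc x)) S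
    _ = ENNReal.ofReal (2 * β / (β - 1)) * volume.restrict (Ico 0 a₁) S := by
        rw [withDensity_const, Measure.smul_apply, smul_eq_mul]
    _ ≤ ENNReal.ofReal (2 * β / (β - 1)) * volume S := by
        gcongr
        exact Measure.restrict_le_self

theorem volume_le_muMeas (hβ : 0 ≤ β) {E : Set ℝ} (hE : E ⊆ Ico 0 a₁) :
    volume E ≤ muMeas β a₁ a₂ E :=
  calc volume E = ((volume.restrict (Ico 0 a₁)).withDensity 1) E := by
        rw [withDensity_one, Measure.restrict_eq_self _ hE]
    _ ≤ muMeas β a₁ a₂ E :=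
        withDensity_mono (.of_forall fun x => ENNReal.one_le_ofReal.2 (one_le_phi hβ x)) E

theorem volume_cyl_le (ha₁ : 0 < a₁) (hc : condition6 β a₁ a₂) {w : List ℝ}
    (hw : isWord a₁ a₂ w) (hne : w ≠ []) :
    volume (cyl β a₁ a₂ w) ≤ ENNReal.ofReal (a₁ / β ^ w.length) := by
  have hβ := hc.one_lt ha₁
  rw [volume_cyl hβ.le ha₁ (hc.lt ha₁) (hc.lt_mul ha₁).le hw hne]
  gcongr
  exact imageLength_le (hc.mul_sub_one_lt ha₁).le (hc.lt_mul_two ha₁).le hw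

theorem stmt14_general (ha₁ : 0 < a₁) (hc : condition6 β a₁ a₂) :
    ∃ γ : ℝ, 0 < γ ∧ ∀ w : List ℝ, isWord a₁ a₂ w → w ≠ [] → ∀ E ⊆ cyl β a₁ a₂ w,
      muMeas β a₁ a₂ ((greedyT β a₁ a₂)^[w.length] '' E) * muMeas β a₁ a₂ (cyl β a₁ a₂ w) ≤
        ENNReal.ofReal γ * muMeas β a₁ a₂ E := by
  have hβ := hc.one_lt ha₁
  have hβ0 : 0 < β := one_pos.trans hβ
  set C := 2 * β / (β - 1)
  have hC : 0 < C := div_pos (by positivity) (sub_pos.2 hβ)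
  refine ⟨C * C * a₁, by positivity, fun w hw hne E hE => ?_⟩
  have hE_Ico := hE.trans (cyl_subset_Ico hβ.le ha₁ (hc.lt ha₁) (hc.lt_mul ha₁).le hw hne)
  set P := β ^ w.length
  have hP : 0 < P := pow_pos hβ0 _
  calc muMeas β a₁ a₂ ((greedyT β a₁ a₂)^[w.length] '' E) * muMeas β a₁ a₂ (cyl β a₁ a₂ w)
      ≤ (ENNReal.ofReal C * volume ((greedyT β a₁ a₂)^[w.length] '' E)) *
          (ENNReal.ofReal C * volume (cyl β a₁ a₂ w)) :=
        mul_le_mul' (muMeas_le ha₁ hc _) (muMeas_le ha₁ hc _)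
    _ ≤ (ENNReal.ofReal C * (ENNReal.ofReal P * volume E)) *
          (ENNReal.ofReal C * ENNReal.ofReal (a₁ / P)) := by
        rw [volume_iterate_image hβ0 ha₁ (hc.lt ha₁) hw hE]
        gcongr
        exact volume_cyl_le ha₁ hc hw hne
    _ = ENNReal.ofReal (C * C * a₁) * volume E := by
        rw [show C * C * a₁ = C * (P * (C * (a₁ / P))) by field_simp, ENNReal.ofReal_mul hC.le,
          ENNReal.ofReal_mul hP.le, ENNReal.ofReal_mul hC.le]
        ring
    _ ≤ ENNReal.ofReal (C * C * a₁) * muMeas β a₁ a₂ E :=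
        mul_le_mul' le_rfl (volume_le_muMeas hβ0.le hE_Ico)

end

/-- There exists `γ > 0` such that for every `n ≥ 1`, every word
`w` of length `n` over `A` with `Δ(w)` full, and every Borel `E ⊆ Δ(w)`, one
has `μ(Tⁿ(E))·μ(Δ(w)) ≤ γ·μ(E)` (Rohlin's criterion for exactness). -/
theorem stmt14 (β a₁ a₂ : ℝ) (hβ1 : 1 < β) (hβ3 : β < 3)
    (ha₁ : 0 < a₁) (h12 : a₁ < a₂) (hc : condition6 β a₁ a₂) :
    ∃ γ : ℝ, 0 < γ ∧
      ∀ n : ℕ, 1 ≤ n → ∀ w : List ℝ, isWord a₁ a₂ w → w.length = n →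
        isFull β a₁ a₂ w →
        ∀ E : Set ℝ, E ⊆ cyl β a₁ a₂ w → MeasurableSet E →
          muMeas β a₁ a₂ ((greedyT β a₁ a₂)^[n] '' E) *
              muMeas β a₁ a₂ (cyl β a₁ a₂ w) ≤
            ENNReal.ofReal γ * muMeas β a₁ a₂ E := by
  obtain ⟨γ, hγ, hrohlin⟩ := stmt14_general ha₁ hc
  exact ⟨γ, hγ, fun n hn w hw hlen _ E hE _ =>
    hlen ▸ hrohlin w hw (List.length_pos_iff.1 (hlen ▸ hn)) E hE⟩
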